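/- Let Θ be a nonempty finite set. For any μ̄ ∈ ΔΘ, any Borel set D ⊆ ΔΘ, any bounded measurable f : ΔΘ → ℝ, and any p ∈ I(μ̄) with p(D) = 1, there exists q ∈ I(μ̄) with q(D) = 1 such that the support of q is an affinely independent subset of ΔΘ (hence of cardinality at most |Θ|) and ∫ f dq ≥ ∫ f dp. -/

import Mathlib

open MeasureTheory

/-- The receiver's best responses `A*_R(μ)` to a belief vector `μ` on a finite state
space. -/
def BRf {A Θ : Type*} [Fintype Θ] (uR : A → Θ → ℝ) (μ : Θ → ℝ) : Set A :=
  {a | ∀ a' : A, ∑ θ, uR a' θ * μ θ ≤ ∑ θ, uR a θ * μ θ}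

/-- The belief simplex `ΔΘ` over a finite state space, viewed as a subspace of `ℝ^Θ`. -/
abbrev Belief (Θ : Type*) [Fintype Θ] : Type _ := {f : Θ → ℝ // f ∈ stdSimplex ℝ Θ}

/-- The sender's upper value function `v` (finite model, state-dependent sender
utility). -/
noncomputable def vF {A Θ : Type*} [Fintype Θ] (uS uR : A → Θ → ℝ) (μ : Θ → ℝ) : ℝ :=
  sSup ((fun a => ∑ θ, uS a θ * μ θ) '' BRf uR μ)

/-- The sender's lower value function `w` (finite model, state-dependent sender
utility). -/
noncomputable def wF {A Θ : Type*} [Fintype Θ] (uS uR : A → Θ → ℝ) (μ : Θ → ℝ) : ℝ :=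
  sInf ((fun a => ∑ θ, uS a θ * μ θ) '' BRf uR μ)

/-- The set `I(μ0)` of information policies: Borel probability measures on the belief
simplex whose barycenter is the prior `μ0`. -/
def IPolF {Θ : Type*} [Fintype Θ] (μ0 : Θ → ℝ) : Set (ProbabilityMeasure (Belief Θ)) :=
  {p | ∀ θ : Θ, ∫ μ, (μ : Belief Θ).1 θ ∂(p : Measure (Belief Θ)) = μ0 θ}

/-- `v̂(μ0)`: the sender's best equilibrium (Bayesian persuasion) value (finite model). -/
noncomputable def vHatF {A Θ : Type*} [Fintype Θ] (uS uR : A → Θ → ℝ) (μ0 : Θ → ℝ) : ℝ :=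
  sSup ((fun p : ProbabilityMeasure (Belief Θ) =>
    ∫ μ, vF uS uR (μ : Belief Θ).1 ∂(p : Measure (Belief Θ))) '' IPolF μ0)

/-- `ŵ(μ0)`: the sender's worst equilibrium value (finite model). -/
noncomputable def wHatF {A Θ : Type*} [Fintype Θ] (uS uR : A → Θ → ℝ) (μ0 : Θ → ℝ) : ℝ :=
  sSup ((fun p : ProbabilityMeasure (Belief Θ) =>
    ∫ μ, wF uS uR (μ : Belief Θ).1 ∂(p : Measure (Belief Θ))) '' IPolF μ0)

/-- The (topological) support of a Borel probability measure on the belief simplex. -/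
def msupport {Θ : Type*} [Fintype Θ] (q : ProbabilityMeasure (Belief Θ)) :
    Set (Belief Θ) :=
  {x | ∀ U : Set (Belief Θ), IsOpen U → x ∈ U → (q : Measure (Belief Θ)) U ≠ 0}

/-- Supporting functional at a point outside a convex hull in finite dimension. -/
lemma aux_support {V : Type} [NormedAddCommGroup V] [NormedSpace ℝ V] [FiniteDimensional ℝ V]
    (S : Set V) (hS : S.Nonempty) (x : V) (hx : x ∉ convexHull ℝ S) :
    ∃ φ : V →L[ℝ] ℝ, φ ≠ 0 ∧ ∀ s ∈ S, φ s ≤ φ x := by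
  by_cases hsp : affineSpan ℝ S = ⊤
  · have hint : (interior (convexHull ℝ S)).Nonempty :=
      interior_convexHull_nonempty_iff_affineSpan_eq_top.2 hsp
    have hconv := convex_convexHull ℝ S
    obtain ⟨φ, hφ⟩ := geometric_hahn_banach_open_point hconv.interior isOpen_interior
      (fun h => hx (interior_subset h))
    refine ⟨φ, ?_, fun s hs => ?_⟩
    · rintro rfl
      obtain ⟨y, hy⟩ := hint
      simpa using hφ y hy
    · have h1 : s ∈ closure (interior (convexHull ℝ S)) := by
        rw [hconv.closure_interior_eq_closure_of_nonempty_interior hint]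
        exact subset_closure (subset_convexHull ℝ S hs)
      have h2 : closure (interior (convexHull ℝ S)) ⊆ {y | φ y ≤ φ x} :=
        closure_minimal (fun y hy => (hφ y hy).le)
          (isClosed_le φ.continuous continuous_const)
      exact h2 h1
  · obtain ⟨s₀, hs₀⟩ := hS
    have hdir : vectorSpan ℝ S < ⊤ := by
      rw [lt_top_iff_ne_top]
      intro h
      apply hsp
      rw [← direction_affineSpan] at h
      exact (AffineSubspace.direction_eq_top_iff_of_nonempty
        ⟨s₀, subset_affineSpan ℝ S hs₀⟩).1 h
    obtain ⟨ψ, hψ, hker⟩ := Submodule.exists_le_ker_of_lt_top _ hdir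
    have hc : ∀ s ∈ S, ψ s = ψ s₀ := by
      intro s hs
      have := hker (vsub_mem_vectorSpan ℝ hs hs₀)
      rw [LinearMap.mem_ker, vsub_eq_sub, map_sub, sub_eq_zero] at this
      exact this
    rcases le_total (ψ s₀) (ψ x) with h | h
    · refine ⟨LinearMap.toContinuousLinearMap ψ, ?_, fun s hs => ?_⟩
      · intro h0; apply hψ; ext v; simpa using congrArg (fun g => g v) h0
      · simpa [hc s hs] using h
    · refine ⟨-LinearMap.toContinuousLinearMap ψ, ?_, fun s hs => ?_⟩
      · intro h0; apply hψ; ext v; simpa using congrArg (fun g => g v) h0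
      · simpa [hc s hs] using h

lemma aux_hull {Ω : Type} [MeasurableSpace Ω] (μ : Measure Ω) [IsProbabilityMeasure μ] (n : ℕ) :
    ∀ (V : Type) [NormedAddCommGroup V] [NormedSpace ℝ V] [FiniteDimensional ℝ V],
      Module.finrank ℝ V = n → ∀ (g : Ω → V) (S : Set V), Integrable g μ →
      (∀ᵐ ω ∂μ, g ω ∈ S) → ∫ ω, g ω ∂μ ∈ convexHull ℝ S := by
  induction n using Nat.strong_induction_on with
  | _ n ih =>
  intro V _ _ _ hn g S hg hS
  have : CompleteSpace V := FiniteDimensional.complete ℝ V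
  by_contra hx
  set x := ∫ ω, g ω ∂μ with hxdef
  have hne : S.Nonempty := by
    obtain ⟨ω, hω⟩ := hS.exists
    exact ⟨_, hω⟩
  have : ∃ φ : V →L[ℝ] ℝ, φ ≠ 0 ∧ ∀ s ∈ S, φ s ≤ φ x := by
    obtain ⟨φ, h1, h2⟩ := aux_support S hne x hx
    exact ⟨φ, h1, h2⟩
  obtain ⟨φ, hφ, hle⟩ := this
  have hint : ∫ ω, φ (g ω) ∂μ = φ x := φ.integral_comp_comm hg
  have hφg : Integrable (fun ω => φ (g ω)) μ := φ.integrable_comp hg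
  have hae : ∀ᵐ ω ∂μ, φ (g ω) = φ x := by
    have h0 : ∫ ω, (φ x - φ (g ω)) ∂μ = 0 := by
      rw [integral_sub (integrable_const _) hφg, hint]; simp
    have h1 := (integral_eq_zero_iff_of_nonneg_ae
      (f := fun ω => φ x - φ (g ω)) (by
        filter_upwards [hS] with ω hω
        simpa using hle _ hω) ((integrable_const _).sub hφg)).1 h0
    filter_upwards [h1] with ω hω
    have : φ x - φ (g ω) = 0 := hω
    linarith
  let K : Submodule ℝ V := LinearMap.ker (φ : V →ₗ[ℝ] ℝ)
  have hK : Module.finrank ℝ K < n := by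
    rw [← hn]
    apply Submodule.finrank_lt
    intro h
    apply hφ
    ext v
    have : v ∈ K := by
      change LinearMap.ker (φ : V →ₗ[ℝ] ℝ) = ⊤ at h
      change v ∈ LinearMap.ker (φ : V →ₗ[ℝ] ℝ)
      rw [h]; trivial
    simpa [K] using this
  obtain ⟨π, hπ⟩ := LinearMap.exists_leftInverse_of_injective K.subtype K.ker_subtype
  let πc : V →L[ℝ] K := LinearMap.toContinuousLinearMap π
  have hgx : Integrable (fun ω => g ω - x) μ := hg.sub (integrable_const _)
  have key := ih _ hK K rfl (fun ω => πc (g ω - x)) {k : K | x + (k : V) ∈ S}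
    (πc.integrable_comp hgx) (by
      filter_upwards [hS, hae] with ω h1 h2
      have hk : g ω - x ∈ K := by simp [K, h2]
      have h3 : π (g ω - x) = ⟨g ω - x, hk⟩ := LinearMap.congr_fun hπ ⟨g ω - x, hk⟩
      change x + ((π (g ω - x) : K) : V) ∈ S
      rw [h3]; simpa using h1)
  rw [πc.integral_comp_comm hgx, integral_sub hg (integrable_const _)] at key
  simp only [integral_const, probReal_univ, one_smul, ← hxdef, sub_self, map_zero] at key
  apply hx
  let A : K →ᵃ[ℝ] V := AffineMap.const ℝ K x + K.subtype.toAffineMap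
  have h4 : A 0 ∈ A '' convexHull ℝ {k : K | x + (k : V) ∈ S} := ⟨0, key, rfl⟩
  rw [AffineMap.image_convexHull] at h4
  have h5 : A 0 = x := by simp [A]
  rw [h5] at h4
  refine convexHull_mono ?_ h4
  rintro _ ⟨k, hk, rfl⟩
  simpa [A] using hk

lemma aux_reduce {V : Type} [AddCommGroup V] [Module ℝ V] (F : V → ℝ) (m : V) (r : ℝ)
    (D : Set V) (n : ℕ) : ∀ (T : Finset V) (w : V → ℝ), T.card = n → ↑T ⊆ D →
      (∀ t ∈ T, 0 ≤ w t) → ∑ t ∈ T, w t = 1 → ∑ t ∈ T, w t • t = m → r ≤ ∑ t ∈ T, w t * F t →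
      ∃ (T : Finset V) (w : V → ℝ), ↑T ⊆ D ∧ (∀ t ∈ T, 0 ≤ w t) ∧ ∑ t ∈ T, w t = 1 ∧
        ∑ t ∈ T, w t • t = m ∧ r ≤ ∑ t ∈ T, w t * F t ∧
        AffineIndependent ℝ ((↑) : T → V) := by
  classical
  induction n using Nat.strong_induction_on with
  | _ n ih =>
  intro T w hn hTD hw h1 hm hr
  by_cases haff : AffineIndependent ℝ ((↑) : T → V)
  · exact ⟨T, w, hTD, hw, h1, hm, hr, haff⟩
  have : ∃ c : V → ℝ, ∑ t ∈ T, c t • t = 0 ∧ ∑ t ∈ T, c t = 0 ∧ (∃ t ∈ T, c t ≠ 0) ∧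
      0 ≤ ∑ t ∈ T, c t * F t := by
    obtain ⟨c, hc1, hc2, t, ht, hct⟩ := exists_nontrivial_relation_sum_zero_of_not_affine_ind haff
    rcases le_total 0 (∑ t ∈ T, c t * F t) with h | h
    · exact ⟨c, hc1, hc2, ⟨t, ht, hct⟩, h⟩
    · refine ⟨-c, ?_, ?_, ⟨t, ht, by simpa using hct⟩, ?_⟩
      · simp [hc1]
      · simp [hc2]
      · simpa using h
  obtain ⟨c, hc1, hc2, ⟨t, ht, hct⟩, hcF⟩ := this
  have hneg : (T.filter (fun t => c t < 0)).Nonempty := by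
    by_contra hcon
    rw [Finset.not_nonempty_iff_eq_empty, Finset.filter_eq_empty_iff] at hcon
    exact hct ((Finset.sum_eq_zero_iff_of_nonneg (fun i hi => not_lt.1 (hcon hi))).1 hc2 t ht)
  obtain ⟨a, ha, hmin⟩ := Finset.exists_min_image _ (fun t => w t / (- c t)) hneg
  rw [Finset.mem_filter] at ha
  obtain ⟨haT, hca⟩ := ha
  set s := w a / (- c a) with hs
  have hs0 : 0 ≤ s := div_nonneg (hw a haT) (by linarith)
  have hza : w a + s * c a = 0 := by
    have := hca.ne
    rw [hs, div_neg, neg_mul, div_mul_cancel₀ _ this, add_neg_cancel]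
  have hnn : ∀ t ∈ T, 0 ≤ w t + s * c t := by
    intro t ht
    by_cases hct : c t < 0
    · have := hmin t (Finset.mem_filter.2 ⟨ht, hct⟩)
      rw [le_div_iff₀ (by linarith)] at this
      linarith
    · have := mul_nonneg hs0 (not_lt.1 hct)
      linarith [hw t ht]
  refine ih (T.erase a).card (by rw [← hn]; exact Finset.card_erase_lt_of_mem haT) (T.erase a)
    (fun t => w t + s * c t) rfl ?_ ?_ ?_ ?_ ?_
  · exact fun t ht => hTD (Finset.mem_of_mem_erase ht)
  · exact fun t ht => hnn t (Finset.mem_of_mem_erase ht)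
  · rw [Finset.sum_erase (f := fun t => w t + s * c t) _ hza, Finset.sum_add_distrib, ← Finset.mul_sum, h1, hc2]; simp
  · rw [Finset.sum_erase _ (by rw [hza, zero_smul])]
    simp only [add_smul, mul_smul]
    rw [Finset.sum_add_distrib, ← Finset.smul_sum, hm, hc1]; simp
  · rw [Finset.sum_erase _ (by rw [hza, zero_mul])]
    simp only [add_mul, mul_assoc]
    rw [Finset.sum_add_distrib, ← Finset.mul_sum]
    have := mul_nonneg hs0 hcF
    linarith

/-- **Carathéodory-type lemma.** For a finite state space, any information policy `p`
with barycenter `μ0` supported on a Borel set `D` can be replaced by an information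
policy `q` with the same barycenter, supported on `D`, with affinely independent
support, and with a weakly larger integral of any bounded measurable `f`. -/
theorem exists_affineIndependent_support_policy
    (Θ : Type) [Fintype Θ] [Nonempty Θ] (μ0 : Θ → ℝ) (hμ0 : μ0 ∈ stdSimplex ℝ Θ)
    (D : Set (Belief Θ)) (hD : MeasurableSet D)
    (f : Belief Θ → ℝ) (hfm : Measurable f) (hfb : ∃ C : ℝ, ∀ x, |f x| ≤ C)
    (p : ProbabilityMeasure (Belief Θ)) (hp : p ∈ IPolF μ0)
    (hpD : (p : Measure (Belief Θ)) D = 1) :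
    ∃ q : ProbabilityMeasure (Belief Θ), q ∈ IPolF μ0 ∧
      (q : Measure (Belief Θ)) D = 1 ∧
      AffineIndependent ℝ (fun x : msupport q => ((x : Belief Θ) : Θ → ℝ)) ∧
      ∫ x, f x ∂(p : Measure (Belief Θ)) ≤ ∫ x, f x ∂(q : Measure (Belief Θ)) := by
  classical
  obtain ⟨C, hC⟩ := hfb
  set P : Measure (Belief Θ) := (p : Measure (Belief Θ)) with hP
  have hfi : Integrable f P :=
    Integrable.of_bound hfm.aestronglyMeasurable C (Filter.Eventually.of_forall hC)
  have hcoord : ∀ (q : Measure (Belief Θ)) [IsProbabilityMeasure q] (θ : Θ),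
      Integrable (fun x : Belief Θ => x.1 θ) q := by
    intro q _ θ
    refine Integrable.of_bound
      ((measurable_pi_apply θ).comp measurable_subtype_coe).aestronglyMeasurable 1
      (Filter.Eventually.of_forall fun x => ?_)
    rw [Real.norm_eq_abs, abs_of_nonneg (x.2.1 θ)]
    exact (mem_Icc_of_mem_stdSimplex x.2 θ).2
  have hval : Integrable (fun x : Belief Θ => x.1) P := Integrable.of_eval (hcoord P)
  have hDae : ∀ᵐ x ∂P, x ∈ D := (mem_ae_iff_prob_eq_one hD).2 hpD
  have hbar : ∫ x, x.1 ∂P = μ0 := by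
    ext θ
    rw [eval_integral (fun i => hcoord P i)]
    exact hp θ
  let F : (Θ → ℝ) → ℝ := fun v => if h : v ∈ stdSimplex ℝ Θ then f ⟨v, h⟩ else 0
  have hF : ∀ x : Belief Θ, F x.1 = f x := fun x => by simp [F, x.2]
  have hull := aux_hull P _ ((Θ → ℝ) × ℝ) rfl (fun x => (x.1, f x))
    ((fun x : Belief Θ => ((x.1, f x) : (Θ → ℝ) × ℝ)) '' D) (hval.prodMk hfi) (by
      filter_upwards [hDae] with x hx
      exact ⟨x, hx, rfl⟩)
  rw [integral_pair hval hfi, hbar, convexHull_eq_union_convexHull_finite_subsets] at hull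
  simp only [Set.mem_iUnion] at hull
  obtain ⟨s, hsS, hs⟩ := hull
  rw [Finset.mem_convexHull'] at hs
  obtain ⟨w, hw0, hw1, hws⟩ := hs
  have hsF : ∀ y ∈ s, y.2 = F y.1 := by
    intro y hy
    obtain ⟨x, hx, rfl⟩ := hsS hy
    exact (hF x).symm
  have hinj : Set.InjOn Prod.fst (s : Set ((Θ → ℝ) × ℝ)) := by
    intro y hy z hz h
    exact Prod.ext h (by rw [hsF y hy, hsF z hz, h])
  have hyy : ∀ y ∈ s, (y.1, F y.1) = y := fun y hy => by rw [← hsF y hy]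
  obtain ⟨T, u, hTD, hu0, hu1, hum, hur, haff⟩ := aux_reduce F μ0 (∫ x, f x ∂P)
    (Subtype.val '' D) _ (s.image Prod.fst) (fun v => w (v, F v)) rfl
    (by
      intro v hv
      obtain ⟨y, hy, rfl⟩ := Finset.mem_image.1 hv
      obtain ⟨x, hx, rfl⟩ := hsS hy
      exact ⟨x, hx, rfl⟩)
    (by
      intro v hv
      obtain ⟨y, hy, rfl⟩ := Finset.mem_image.1 hv
      rw [hyy y hy]; exact hw0 y hy)
    (by
      rw [Finset.sum_image hinj, ← hw1]
      exact Finset.sum_congr rfl fun y hy => by rw [hyy y hy])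
    (by
      rw [Finset.sum_image hinj]
      have := congrArg Prod.fst hws
      rw [Prod.fst_sum] at this
      refine Eq.trans ?_ this
      exact Finset.sum_congr rfl fun y hy => by rw [hyy y hy]; rfl)
    (by
      rw [Finset.sum_image hinj]
      have := congrArg Prod.snd hws
      rw [Prod.snd_sum] at this
      refine le_of_eq (this.symm.trans (Finset.sum_congr rfl fun y hy => ?_))
      rw [hyy y hy, ← hsF y hy]; rfl)
  have hTs : ∀ v ∈ T, v ∈ stdSimplex ℝ Θ := by
    intro v hv
    obtain ⟨x, _, rfl⟩ := hTD hv
    exact x.2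
  let T2 : Finset (Belief Θ) := T.subtype (· ∈ stdSimplex ℝ Θ)
  have hT2 : ∀ x ∈ T2, x.1 ∈ T := fun x hx => Finset.mem_subtype.1 hx
  have hT2D : ∀ x ∈ T2, x ∈ D := by
    intro x hx
    obtain ⟨y, hy, h⟩ := hTD (hT2 x hx)
    rwa [← Subtype.ext h]
  let Q : Measure (Belief Θ) := ∑ x ∈ T2, ENNReal.ofReal (u x.1) • Measure.dirac x
  have hsum : ∀ g : (Θ → ℝ) → ℝ, ∑ x ∈ T2, g x.1 = ∑ t ∈ T, g t := fun g =>
    Finset.sum_subtype_of_mem g hTs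
  have hQset : ∀ A : Set (Belief Θ), (∀ x ∈ T2, x ∈ A) → Q A = 1 := by
    intro A hA
    have : Q A = ∑ x ∈ T2, ENNReal.ofReal (u x.1) := by
      simp only [Q, Measure.finsetSum_apply, Measure.smul_apply, smul_eq_mul]
      refine Finset.sum_congr rfl fun x hx => ?_
      rw [Measure.dirac_apply_of_mem (hA x hx), mul_one]
    rw [this, ← ENNReal.ofReal_sum_of_nonneg (fun x hx => hu0 _ (hT2 x hx)), hsum, hu1,
      ENNReal.ofReal_one]
  have hQp : IsProbabilityMeasure Q := ⟨hQset _ fun _ _ => trivial⟩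
  have hQint : ∀ g : Belief Θ → ℝ, ∫ x, g x ∂Q = ∑ x ∈ T2, u x.1 * g x := by
    intro g
    rw [integral_finsetSum_measure]
    · refine Finset.sum_congr rfl fun x hx => ?_
      rw [integral_smul_measure, integral_dirac, ENNReal.toReal_ofReal (hu0 _ (hT2 x hx)),
        smul_eq_mul]
    · intro x hx
      exact (integrable_dirac (by simp)).smul_measure ENNReal.ofReal_ne_top
  refine ⟨⟨Q, hQp⟩, ?_, hQset D hT2D, ?_, ?_⟩
  · intro θ
    change ∫ x : Belief Θ, x.1 θ ∂Q = μ0 θ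
    rw [hQint, hsum (fun v => u v * v θ), ← hum]
    simp
  · have hsub : ∀ x ∈ msupport (⟨Q, hQp⟩ : ProbabilityMeasure (Belief Θ)), x.1 ∈ T := by
      intro x hx
      by_contra hxT
      have hxT2 : x ∈ ((T2 : Set (Belief Θ)))ᶜ := fun h => hxT (hT2 x h)
      refine hx _ T2.finite_toSet.isClosed.isOpen_compl hxT2 ?_
      change Q _ = 0
      exact (prob_compl_eq_zero_iff T2.finite_toSet.measurableSet).2 (hQset _ fun _ h => h)
    exact haff.comp_embedding ⟨fun x : msupport (⟨Q, hQp⟩ : ProbabilityMeasure (Belief Θ)) =>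
      (⟨x.1.1, hsub x.1 x.2⟩ : T), fun x y h => by
        apply Subtype.ext; apply Subtype.ext; exact Subtype.mk.inj h⟩
  · change ∫ x, f x ∂P ≤ ∫ x, f x ∂Q
    rw [hQint]
    refine hur.trans (le_of_eq ?_)
    rw [← hsum (fun v => u v * F v)]
    exact Finset.sum_congr rfl fun x _ => by rw [hF]
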